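/- Let d ≥ 2, let X be a random vector in ℝ^d distributed according to the multivariate Gaussian law with mean vector m and positive definite covariance matrix Σ, and let r ≥ |m|. Set c = (tr Σ − λ_max(Σ))/(r + (tr Σ)^{1/2}). Then E|(1 − c/|X|)·X − m|² ≤ E|X − m|² − c². -/

import Mathlib

open Real MeasureTheory

/-- The multivariate Gaussian measure on `ℝ^d` (with the Euclidean structure), with mean
vector `m` and (positive definite) covariance matrix `S`, defined via its density with
respect to the Lebesgue measure. -/
noncomputable def multiGaussian (d : ℕ) (m : EuclideanSpace ℝ (Fin d))
    (S : Matrix (Fin d) (Fin d) ℝ) : Measure (EuclideanSpace ℝ (Fin d)) :=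
  volume.withDensity fun x => ENNReal.ofReal
    ((2 * Real.pi) ^ (-(d : ℝ) / 2) * S.det ^ (-(1 : ℝ) / 2) *
      Real.exp (-(∑ i, ∑ k, (x i - m i) * S⁻¹ i k * (x k - m k)) / 2))


lemma mg_factor {d : ℕ} {S : Matrix (Fin d) (Fin d) ℝ} (hS : S.PosDef) :
    ∃ B : EuclideanSpace ℝ (Fin d) →ₗ[ℝ] EuclideanSpace ℝ (Fin d),
      (∀ y w, inner ℝ (B y) (B w) = y.ofLp ⬝ᵥ (S⁻¹.mulVec w.ofLp)) ∧
      |LinearMap.det B| = S.det ^ (-(1 : ℝ) / 2) ∧ LinearMap.det B ≠ 0 := by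
  open scoped MatrixOrder in
  obtain ⟨A, hA⟩ : ∃ A : Matrix (Fin d) (Fin d) ℝ, S⁻¹ = star A * A :=
    CStarAlgebra.nonneg_iff_eq_star_mul_self.mp hS.inv.posSemidef.nonneg
  have hdet : (S.det)⁻¹ = A.det ^ 2 := by
    have := congrArg Matrix.det hA
    rw [Matrix.det_mul, Matrix.star_eq_conjTranspose, Matrix.det_conjTranspose,
      Matrix.det_nonsing_inv, Ring.inverse_eq_inv'] at this
    simpa [sq] using this
  have hp := hS.det_pos
  have hA0 : A.det ≠ 0 := by
    intro h
    rw [h] at hdet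
    have := inv_pos.mpr hp
    norm_num at hdet
    linarith
  refine ⟨A.toLpLin 2 2, ?_, ?_, ?_⟩
  · intro y w
    rw [hA, EuclideanSpace.inner_eq_star_dotProduct]
    simp only [Matrix.toLpLin_apply, star_trivial]
    rw [← Matrix.mulVec_mulVec, Matrix.dotProduct_mulVec, Matrix.star_eq_conjTranspose,
      Matrix.conjTranspose_eq_transpose_of_trivial, Matrix.mulVec_transpose, dotProduct_comm]
  · rw [LinearMap.det_toLpLin, ← Real.sqrt_sq_eq_abs, ← hdet, Real.sqrt_eq_rpow,
      Real.inv_rpow hp.le, ← Real.rpow_neg hp.le]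
    norm_num
  · rwa [LinearMap.det_toLpLin]

lemma mg_rayleigh {d : ℕ} {S : Matrix (Fin d) (Fin d) ℝ} (hS : S.IsHermitian)
    (x : EuclideanSpace ℝ (Fin d)) :
    x.ofLp ⬝ᵥ (S.mulVec x.ofLp) ≤ (⨆ i, hS.eigenvalues i) * ‖x‖ ^ 2 := by
  set b := hS.eigenvectorBasis
  have key : x.ofLp ⬝ᵥ (S.mulVec x.ofLp) = ∑ i, hS.eigenvalues i * (inner ℝ (b i) x) ^ 2 := by
    have h1 : x.ofLp ⬝ᵥ (S.mulVec x.ofLp) = inner ℝ x (WithLp.toLp 2 (S.mulVec x.ofLp)) := by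
      rw [EuclideanSpace.inner_eq_star_dotProduct]
      simp [dotProduct_comm]
    rw [h1, ← b.sum_inner_mul_inner]
    refine Finset.sum_congr rfl fun i _ => ?_
    have h2 : inner ℝ (b i) (WithLp.toLp 2 (S.mulVec x.ofLp))
        = hS.eigenvalues i * inner ℝ (b i) x := by
      rw [EuclideanSpace.inner_eq_star_dotProduct, EuclideanSpace.inner_eq_star_dotProduct]
      simp only [star_trivial]
      have hT : S.transpose = S := by
        simpa [Matrix.conjTranspose_eq_transpose_of_trivial] using hS.eq
      rw [dotProduct_comm, Matrix.dotProduct_mulVec, ← Matrix.mulVec_transpose, hT,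
        hS.mulVec_eigenvectorBasis, smul_dotProduct, dotProduct_comm, smul_eq_mul]
    rw [h2, real_inner_comm]; ring
  rw [key, ← b.sum_sq_norm_inner_right x, Finset.mul_sum]
  refine Finset.sum_le_sum fun i _ => ?_
  rw [Real.norm_eq_abs, sq_abs]
  exact mul_le_mul_of_nonneg_right (le_ciSup (Set.finite_range _).bddAbove i) (sq_nonneg _)

lemma mg_trace {d : ℕ} (hd : 2 ≤ d) {S : Matrix (Fin d) (Fin d) ℝ} (hS : S.PosDef) :
    0 < S.trace ∧ 0 ≤ S.trace - ⨆ i, hS.1.eigenvalues i := by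
  have : Nonempty (Fin d) := ⟨⟨0, by omega⟩⟩
  have ht : S.trace = ∑ i, hS.1.eigenvalues i := by
    simpa using hS.1.trace_eq_sum_eigenvalues
  constructor
  · rw [ht]
    exact Finset.sum_pos (fun i _ => hS.eigenvalues_pos i) Finset.univ_nonempty
  · rw [sub_nonneg, ht]
    exact ciSup_le fun i =>
      Finset.single_le_sum (fun j _ => (hS.eigenvalues_pos j).le) (Finset.mem_univ i)

lemma mg_gauss_integrable {d : ℕ} {b : ℝ} (hb : 0 < b) :
    Integrable (fun x : EuclideanSpace ℝ (Fin d) => Real.exp (-b * ‖x‖ ^ 2)) := by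
  have h := GaussianFourier.integrable_cexp_neg_mul_sq_norm_add (b := (b : ℂ))
    (V := EuclideanSpace ℝ (Fin d)) (by simpa using hb) 0 0
  refine h.norm.congr (Filter.Eventually.of_forall fun x => ?_)
  simp [Complex.norm_exp, ← Complex.ofReal_pow]

lemma mg_mass {d : ℕ} (m : EuclideanSpace ℝ (Fin d))
    (B : EuclideanSpace ℝ (Fin d) →ₗ[ℝ] EuclideanSpace ℝ (Fin d)) (hB : LinearMap.det B ≠ 0) :
    ∫ x, Real.exp (-‖B (x - m)‖ ^ 2 / 2) = |LinearMap.det B|⁻¹ * (2 * Real.pi) ^ ((d : ℝ) / 2) := by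
  rw [integral_sub_right_eq_self (fun x => Real.exp (-‖B x‖ ^ 2 / 2)) m]
  have hm : Measurable B := B.continuous_of_finiteDimensional.measurable
  have h := integral_map (μ := volume) hm.aemeasurable
    (f := fun x => Real.exp (-‖x‖ ^ 2 / 2)) (by fun_prop)
  rw [← h, Measure.map_linearMap_addHaar_eq_smul_addHaar _ hB, integral_smul_measure]
  have h2 := GaussianFourier.integral_rexp_neg_mul_sq_norm (V := EuclideanSpace ℝ (Fin d))
    (b := 1/2) (by norm_num)
  have h3 : (fun x : EuclideanSpace ℝ (Fin d) => Real.exp (-‖x‖ ^ 2 / 2))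
      = fun x => Real.exp (-(1/2) * ‖x‖ ^ 2) := by
    ext x; congr 1; ring
  rw [h3, h2, ENNReal.toReal_ofReal (abs_nonneg _), abs_inv, smul_eq_mul]
  simp [mul_comm]

lemma mg_core {d : ℕ} (m : EuclideanSpace ℝ (Fin d)) {S : Matrix (Fin d) (Fin d) ℝ}
    (hS : S.PosDef) :
    ∃ (p : EuclideanSpace ℝ (Fin d) → ℝ)
      (p' : EuclideanSpace ℝ (Fin d) → (EuclideanSpace ℝ (Fin d) →L[ℝ] ℝ)),
      Continuous p ∧ (∀ x, 0 ≤ p x) ∧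
      multiGaussian d m S = volume.withDensity (fun x => ENNReal.ofReal (p x)) ∧
      (∀ x, HasFDerivAt p (p' x) x) ∧
      (∀ x j, p' x (WithLp.toLp 2 (S.mulVec (Pi.single j 1))) = -((x j - m j) * p x)) ∧
      ∫ x, p x = 1 ∧
      ∃ K δ : ℝ, 0 ≤ K ∧ 0 < δ ∧ ∀ x, p x ≤ K * Real.exp (-δ * ‖x - m‖ ^ 2) := by
  obtain ⟨B, hin, hdet, hB⟩ := mg_factor hS
  have hBc : Continuous B := B.continuous_of_finiteDimensional
  set k : ℝ := (2 * Real.pi) ^ (-(d : ℝ) / 2) * S.det ^ (-(1 : ℝ) / 2) with hk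
  have hk0 : 0 ≤ k := by
    have := hS.det_pos.le
    positivity
  have hq : ∀ x : EuclideanSpace ℝ (Fin d),
      (∑ i, ∑ k, (x i - m i) * S⁻¹ i k * (x k - m k)) = ‖B (x - m)‖ ^ 2 := by
    intro x
    rw [← real_inner_self_eq_norm_sq, hin]
    simp only [dotProduct, Matrix.mulVec, Finset.mul_sum, mul_assoc]
    rfl
  refine ⟨fun x => k * Real.exp (-‖B (x - m)‖ ^ 2 / 2),
    fun x => (k * Real.exp (-‖B (x - m)‖ ^ 2 / 2)) •
      (-((innerSL ℝ (B (x - m))).comp B.toContinuousLinearMap)), by fun_prop,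
      fun x => by positivity, ?_, ?_, ?_, ?_, ?_⟩
  · simp only [multiGaussian, hq]
    rfl
  · intro x
    have h1 : HasFDerivAt (fun x => B (x - m)) B.toContinuousLinearMap x := by
      have := (B.toContinuousLinearMap.hasFDerivAt (x := x - m)).comp x
        ((hasFDerivAt_id x).sub_const m)
      exact this.congr_fderiv (by ext; simp)
    have h2 := (h1.norm_sq.const_mul (-1/2 : ℝ)).exp.const_mul k
    have e : (fun x => k * Real.exp (-‖B (x - m)‖ ^ 2 / 2))
      = fun x => k * Real.exp ((-1/2) * ‖B (x - m)‖ ^ 2) := by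
      ext x; congr 2; ring
    rw [e]
    refine h2.congr_fderiv ?_
    ext v
    simp
    ring_nf
  · intro x j
    have h1 : inner ℝ (B (x - m)) (B (WithLp.toLp 2 (S.mulVec (Pi.single j 1)))) = x j - m j := by
      rw [hin]
      simp only [Matrix.mulVec_mulVec]
      rw [Matrix.nonsing_inv_mul _ ((Matrix.isUnit_iff_isUnit_det _).1 hS.isUnit)]
      rw [Matrix.one_mulVec, dotProduct_single_one]
      rfl
    simp only [smul_apply, neg_apply,
      ContinuousLinearMap.comp_apply, LinearMap.coe_toContinuousLinearMap', innerSL_apply_apply, h1,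
      smul_eq_mul]
    ring
  · rw [integral_const_mul, mg_mass m B hB, hk, ← hdet]
    have : |LinearMap.det B| ≠ 0 := abs_ne_zero.mpr hB
    have h2 : (2 * Real.pi) ^ (-(d : ℝ) / 2) * (2 * Real.pi) ^ ((d : ℝ) / 2) = 1 := by
      rw [← Real.rpow_add (by positivity)]
      rw [neg_div, neg_add_cancel, Real.rpow_zero]
    calc _ = ((2 * Real.pi) ^ (-(d : ℝ) / 2) * (2 * Real.pi) ^ ((d : ℝ) / 2)) *
        (|LinearMap.det B| * |LinearMap.det B|⁻¹) := by ring
      _ = 1 := by rw [h2, mul_inv_cancel₀ this, one_mul]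
  · let e := (LinearEquiv.ofIsUnitDet (f := B) (v := (PiLp.basisFun 2 ℝ (Fin d)))
      (v' := (PiLp.basisFun 2 ℝ (Fin d)))
      (by rw [LinearMap.det_toMatrix]; exact isUnit_iff_ne_zero.mpr hB)).toContinuousLinearEquiv
    have he : ∀ x, e x = B x := fun x => rfl
    set C := ‖(e.symm : EuclideanSpace ℝ (Fin d) →L[ℝ] EuclideanSpace ℝ (Fin d))‖ + 1 with hC
    have hC0 : 0 < C := by positivity
    have hb : ∀ x, ‖x‖ ≤ C * ‖B x‖ := by
      intro x
      have := (e.symm : EuclideanSpace ℝ (Fin d) →L[ℝ] EuclideanSpace ℝ (Fin d)).le_opNorm (B x)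
      have h2 : e.symm (B x) = x := by rw [← he]; simp
      simp only [ContinuousLinearEquiv.coe_coe, h2] at this
      nlinarith [norm_nonneg (B x)]
    refine ⟨k, 1 / (2 * C ^ 2), hk0, by positivity, fun x => ?_⟩
    refine mul_le_mul_of_nonneg_left (Real.exp_le_exp.mpr ?_) hk0
    have h3 : ‖x - m‖ ^ 2 ≤ C ^ 2 * ‖B (x - m)‖ ^ 2 := by
      rw [← mul_pow]
      exact pow_le_pow_left₀ (norm_nonneg _) (hb _) 2
    have h4 : 1 / (2 * C ^ 2) * ‖x - m‖ ^ 2 ≤ 1 / (2 * C ^ 2) * (C ^ 2 * ‖B (x - m)‖ ^ 2) :=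
      mul_le_mul_of_nonneg_left h3 (by positivity)
    have h5 : 1 / (2 * C ^ 2) * (C ^ 2 * ‖B (x - m)‖ ^ 2) = ‖B (x - m)‖ ^ 2 / 2 := by
      field_simp
    linarith

lemma mg_prob {d : ℕ} (m : EuclideanSpace ℝ (Fin d)) {S : Matrix (Fin d) (Fin d) ℝ}
    (hS : S.PosDef) : IsProbabilityMeasure (multiGaussian d m S) := by
  obtain ⟨p, p', hc, h0, hm, -, -, h1, -⟩ := mg_core m hS
  refine ⟨?_⟩
  rw [hm, withDensity_apply _ MeasurableSet.univ, Measure.restrict_univ,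
    ← ofReal_integral_eq_lintegral_ofReal _ (Filter.Eventually.of_forall h0), h1,
    ENNReal.ofReal_one]
  by_contra h
  rw [integral_undef h] at h1
  norm_num at h1

lemma mg_integrable {d : ℕ} (m : EuclideanSpace ℝ (Fin d))
    {p : EuclideanSpace ℝ (Fin d) → ℝ} (hc : Continuous p) (h0 : ∀ x, 0 ≤ p x)
    (hK : ∃ K δ : ℝ, 0 ≤ K ∧ 0 < δ ∧ ∀ x, p x ≤ K * Real.exp (-δ * ‖x - m‖ ^ 2))
    {f : EuclideanSpace ℝ (Fin d) → ℝ} (hf : Continuous f) {C : ℝ} (hC : 0 ≤ C)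
    (hb : ∀ x, |f x| ≤ C * (1 + ‖x - m‖ ^ 2)) : Integrable (fun x => f x * p x) := by
  obtain ⟨K, δ, hK0, hδ, hK⟩ := hK
  have h := ((mg_gauss_integrable (d := d) (b := δ / 2) (by positivity)).comp_sub_right m).const_mul
    (C * (1 + 2 / δ) * K)
  refine h.mono' (by fun_prop) (Filter.Eventually.of_forall fun x => ?_)
  rw [Real.norm_eq_abs, abs_mul, abs_of_nonneg (h0 x)]
  set t := ‖x - m‖ ^ 2 with ht
  have ht0 : 0 ≤ t := by positivity
  have e1 : 1 + t ≤ (1 + 2 / δ) * Real.exp (δ / 2 * t) := by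
    have h1 := Real.add_one_le_exp (δ / 2 * t)
    have h2 : (1 + 2 / δ) * (δ / 2 * t + 1) = (1 + t) + (δ / 2 * t + 2 / δ) := by
      field_simp
      ring
    have h3 : 0 ≤ δ / 2 * t + 2 / δ := by positivity
    have h4 : (1 + 2 / δ) * (δ / 2 * t + 1) ≤ (1 + 2 / δ) * Real.exp (δ / 2 * t) :=
      mul_le_mul_of_nonneg_left h1 (by positivity)
    linarith
  calc |f x| * p x ≤ (C * ((1 + 2 / δ) * Real.exp (δ / 2 * t))) * (K * Real.exp (-δ * t)) := by
        refine mul_le_mul ((hb x).trans (mul_le_mul_of_nonneg_left e1 hC)) (hK x) (h0 x) ?_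
        positivity
    _ = C * (1 + 2 / δ) * K * (Real.exp (δ / 2 * t) * Real.exp (-δ * t)) := by ring
    _ = _ := by rw [← Real.exp_add]; congr 2; ring

lemma mg_integrable' {d : ℕ} (m : EuclideanSpace ℝ (Fin d)) {S : Matrix (Fin d) (Fin d) ℝ}
    (hS : S.PosDef)
    {f : EuclideanSpace ℝ (Fin d) → ℝ} (hf : Continuous f) {C : ℝ} (hC : 0 ≤ C)
    (hb : ∀ x, |f x| ≤ C * (1 + ‖x - m‖ ^ 2)) : Integrable f (multiGaussian d m S) := by
  obtain ⟨p, p', hc, h0, hm, -, -, h1, hK⟩ := mg_core m hS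
  rw [hm, integrable_withDensity_iff_integrable_smul' (by fun_prop) (by simp)]
  refine (mg_integrable m hc h0 hK hf hC hb).congr (Filter.Eventually.of_forall fun x => ?_)
  simp [ENNReal.toReal_ofReal (h0 x), mul_comm]

lemma mg_stein {d : ℕ} (m : EuclideanSpace ℝ (Fin d)) {S : Matrix (Fin d) (Fin d) ℝ}
    (hS : S.PosDef) (j : Fin d)
    {f : EuclideanSpace ℝ (Fin d) → ℝ} {f' : EuclideanSpace ℝ (Fin d) → (EuclideanSpace ℝ (Fin d) →L[ℝ] ℝ)}
    (hd : ∀ x, HasFDerivAt f (f' x) x) {C : ℝ} (hC : 0 ≤ C)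
    (hb : ∀ x, |f x| ≤ C * (1 + ‖x - m‖ ^ 2))
    (hb1 : ∀ x, |f x * (x j - m j)| ≤ C * (1 + ‖x - m‖ ^ 2))
    (hc' : Continuous fun x => f' x (WithLp.toLp 2 (S.mulVec (Pi.single j 1))))
    (hb' : ∀ x, |f' x (WithLp.toLp 2 (S.mulVec (Pi.single j 1)))| ≤ C * (1 + ‖x - m‖ ^ 2)) :
    ∫ x, f x * (x j - m j) ∂(multiGaussian d m S)
      = ∫ x, f' x (WithLp.toLp 2 (S.mulVec (Pi.single j 1))) ∂(multiGaussian d m S) := by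
  obtain ⟨p, p', hc, h0, hm, hp, hp', h1, hK⟩ := mg_core m hS
  have hf : Continuous f := continuous_iff_continuousAt.mpr fun x => (hd x).continuousAt
  rw [hm, integral_withDensity_eq_integral_toReal_smul (by fun_prop) (by simp),
    integral_withDensity_eq_integral_toReal_smul (by fun_prop) (by simp)]
  simp only [ENNReal.toReal_ofReal (h0 _), smul_eq_mul]
  have key := integral_bilinear_hasFDerivAt_right_eq_neg_left_of_integrable
    (μ := (volume : Measure (EuclideanSpace ℝ (Fin d))))
    (f := f) (f' := f') (g := p) (g' := p') (v := WithLp.toLp 2 (S.mulVec (Pi.single j 1)))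
    (B := ContinuousLinearMap.mul ℝ ℝ) ?_ ?_ ?_ (fun x _ => hd x) (fun x _ => hp x)
  · simp only [ContinuousLinearMap.mul_apply', hp', mul_neg, integral_neg] at key
    have := neg_injective key
    simp only [mul_comm (p _), ← mul_assoc] at this ⊢
    exact this
  · simpa using mg_integrable m hc h0 hK hc' hC hb'
  · simp only [ContinuousLinearMap.mul_apply', hp', mul_neg, ← mul_assoc]
    exact (mg_integrable m hc h0 hK (by fun_prop) hC hb1).neg
  · simpa using mg_integrable m hc h0 hK hf hC hb

lemma mg_coord_le {d : ℕ} (x : EuclideanSpace ℝ (Fin d)) (j : Fin d) : |x j| ≤ ‖x‖ := by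
  simpa using PiLp.norm_apply_le x j

lemma mg_norm_sq {d : ℕ} (x : EuclideanSpace ℝ (Fin d)) : ‖x‖ ^ 2 = ∑ j, x j * x j := by
  rw [EuclideanSpace.norm_sq_eq]
  simp [sq]

lemma mg_inner {d : ℕ} (x y : EuclideanSpace ℝ (Fin d)) : inner ℝ x y = ∑ j, x j * y j := by
  simp [PiLp.inner_apply, mul_comm]

lemma mg_second {d : ℕ} (m : EuclideanSpace ℝ (Fin d)) {S : Matrix (Fin d) (Fin d) ℝ}
    (hS : S.PosDef) :
    ∫ x, ‖x - m‖ ^ 2 ∂(multiGaussian d m S) = S.trace := by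
  have := mg_prob m hS
  have hcoord : ∀ (x : EuclideanSpace ℝ (Fin d)) (j : Fin d), |x j - m j| ≤ ‖x - m‖ :=
    fun x j => mg_coord_le (x - m) j
  have hsq : ∀ (x : EuclideanSpace ℝ (Fin d)) (j : Fin d),
      |(x j - m j) * (x j - m j)| ≤ ‖x - m‖ ^ 2 := by
    intro x j
    rw [abs_mul, ← sq]
    exact pow_le_pow_left₀ (abs_nonneg _) (hcoord x j) 2
  have hst : ∀ j : Fin d, ∫ x, (x j - m j) * (x j - m j) ∂(multiGaussian d m S) = S j j := by
    intro j
    set v : EuclideanSpace ℝ (Fin d) := WithLp.toLp 2 (S.mulVec (Pi.single j 1)) with hv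
    have hvj : v j = S j j := by simp [hv]
    have := mg_stein m hS j (f := fun x => x j - m j)
      (f' := fun _ => EuclideanSpace.proj j) (C := 1 + |S j j|)
      (fun x => ((EuclideanSpace.proj (𝕜 := ℝ) j).hasFDerivAt).sub_const (m j)) (by positivity)
      (fun x => by
        have := hcoord x j
        nlinarith [sq_nonneg (‖x - m‖ - 1), abs_nonneg (S j j), sq_nonneg (‖x - m‖)])
      (fun x => by
        have := hsq x j
        nlinarith [abs_nonneg (S j j), sq_nonneg (‖x - m‖)])
      (by fun_prop)
      (fun x => by
        change |v j| ≤ _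
        rw [hvj]
        nlinarith [abs_nonneg (S j j), sq_nonneg (‖x - m‖)])
    rw [this]
    change ∫ x, v j ∂_ = _
    rw [hvj]
    simp
  have e : ∀ x : EuclideanSpace ℝ (Fin d), ‖x - m‖ ^ 2 = ∑ j, (x j - m j) * (x j - m j) :=
    fun x => mg_norm_sq (x - m)
  simp only [e]
  rw [integral_finsetSum, Matrix.trace]
  · simp [hst]
  · intro j _
    refine mg_integrable' m hS (by fun_prop) (C := 1) (by norm_num) fun x => ?_
    have := hsq x j
    linarith

lemma mg_deriv {d : ℕ} {ε : ℝ} (hε : 0 < ε) (j : Fin d) (x : EuclideanSpace ℝ (Fin d)) :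
    HasFDerivAt (fun x : EuclideanSpace ℝ (Fin d) => x j * (√(‖x‖ ^ 2 + ε))⁻¹)
      ((√(‖x‖ ^ 2 + ε))⁻¹ • (EuclideanSpace.proj j : EuclideanSpace ℝ (Fin d) →L[ℝ] ℝ)
        - (x j * (√(‖x‖ ^ 2 + ε))⁻¹ ^ 3) • innerSL ℝ x) x := by
  have hpos : 0 < ‖x‖ ^ 2 + ε := by positivity
  have hs : 0 < √(‖x‖ ^ 2 + ε) := Real.sqrt_pos.mpr hpos
  have h1 : HasFDerivAt (fun x : EuclideanSpace ℝ (Fin d) => ‖x‖ ^ 2 + ε) (2 • innerSL ℝ x) x := by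
    have := ((hasFDerivAt_id x).norm_sq).add_const ε
    exact this.congr_fderiv (by ext; simp)
  have h2 : HasDerivAt (fun t : ℝ => (√t)⁻¹) (-(1 / (2 * √(‖x‖ ^ 2 + ε))) / √(‖x‖ ^ 2 + ε) ^ 2)
      (‖x‖ ^ 2 + ε) := (Real.hasDerivAt_sqrt hpos.ne').fun_inv hs.ne'
  have h3 := h2.comp_hasFDerivAt x h1
  have h4 := ((EuclideanSpace.proj j : EuclideanSpace ℝ (Fin d) →L[ℝ] ℝ).hasFDerivAt (x := x)).mul h3
  refine h4.congr_fderiv ?_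
  ext v
  simp
  field_simp
  ring

lemma mg_eps {d : ℕ} (hd : 2 ≤ d) (m : EuclideanSpace ℝ (Fin d)) {S : Matrix (Fin d) (Fin d) ℝ}
    (hS : S.PosDef) {r : ℝ} (hr : ‖m‖ ≤ r) {ε : ℝ} (hε : 0 < ε) :
    (S.trace - ⨆ i, hS.1.eigenvalues i) / (r + √S.trace + √ε) ≤
      ∫ x, inner ℝ x (x - m) * (√(‖x‖ ^ 2 + ε))⁻¹ ∂(multiGaussian d m S) := by
  have := mg_prob m hS
  obtain ⟨htr, hkc⟩ := mg_trace hd hS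
  set lam := ⨆ i, hS.1.eigenvalues i with hlam
  set T := √S.trace with hT
  have hT0 : 0 < T := Real.sqrt_pos.mpr htr
  have hT2 : T ^ 2 = S.trace := Real.sq_sqrt htr.le
  have he0 : 0 < √ε := Real.sqrt_pos.mpr hε
  set a := r + T + √ε with ha
  have hr0 : 0 ≤ r := (norm_nonneg m).trans hr
  have ha0 : 0 < a := by positivity
  let s : EuclideanSpace ℝ (Fin d) → ℝ := fun x => √(‖x‖ ^ 2 + ε)
  have hs0 : ∀ x, 0 < s x := fun x => Real.sqrt_pos.mpr (by positivity)
  have hs2 : ∀ x, s x ^ 2 = ‖x‖ ^ 2 + ε := fun x => Real.sq_sqrt (by positivity)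
  have hsx : ∀ x, ‖x‖ ≤ s x := fun x => Real.le_sqrt_of_sq_le (by linarith)
  have hse : ∀ x, √ε ≤ s x := fun x => Real.sqrt_le_sqrt (by linarith [sq_nonneg ‖x‖])
  have hsc : Continuous fun x => (s x)⁻¹ :=
    Continuous.inv₀ (by fun_prop) (fun x => (hs0 x).ne')
  have hsle : ∀ x, s x ≤ ‖x‖ + √ε := fun x => by
    refine Real.sqrt_le_iff.mpr ⟨by positivity, ?_⟩
    nlinarith [Real.sq_sqrt hε.le, norm_nonneg x]
  have hinv : ∀ x, (s x)⁻¹ ≤ (√ε)⁻¹ := fun x => inv_anti₀ he0 (hse x)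
  let v : Fin d → EuclideanSpace ℝ (Fin d) := fun j => WithLp.toLp 2 (S.mulVec (Pi.single j 1))
  have hvk : ∀ j k, v j k = S k j := fun j k => by simp [v]
  let g : Fin d → EuclideanSpace ℝ (Fin d) → ℝ := fun j x =>
    (s x)⁻¹ * v j j - x j * (s x)⁻¹ ^ 3 * inner ℝ x (v j)
  have hgc : ∀ j, Continuous (g j) := fun j => by
    simp only [g]
    fun_prop
  have hxs : ∀ x, ‖x‖ * (s x)⁻¹ ≤ 1 := fun x => by
    rw [← div_eq_mul_inv]; exact div_le_one_of_le₀ (hsx x) (hs0 x).le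
  have hgb : ∀ j x, |g j x| ≤ 2 * ‖v j‖ * (√ε)⁻¹ := fun j x => by
    have hi0 : 0 < (s x)⁻¹ := inv_pos.mpr (hs0 x)
    have h1 : |(s x)⁻¹ * v j j| ≤ ‖v j‖ * (√ε)⁻¹ := by
      rw [abs_mul, abs_of_pos hi0, mul_comm]
      exact mul_le_mul (mg_coord_le _ _) (hinv x) hi0.le (norm_nonneg _)
    have h2 : |x j * (s x)⁻¹ ^ 3 * inner ℝ x (v j)| ≤ ‖v j‖ * (√ε)⁻¹ := by
      rw [abs_mul, abs_mul, abs_of_pos (pow_pos hi0 3)]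
      calc |x j| * (s x)⁻¹ ^ 3 * |inner ℝ x (v j)|
          ≤ ‖x‖ * (s x)⁻¹ ^ 3 * (‖x‖ * ‖v j‖) := by
            gcongr
            · exact mg_coord_le _ _
            · exact abs_real_inner_le_norm _ _
        _ = (‖x‖ * (s x)⁻¹) * (‖x‖ * (s x)⁻¹) * (‖v j‖ * (s x)⁻¹) := by ring
        _ ≤ 1 * 1 * (‖v j‖ * (√ε)⁻¹) := by
            gcongr
            · exact hxs x
            · exact hxs x
            · exact hse x
        _ = _ := by ring
    calc |g j x| ≤ _ := abs_sub _ _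
      _ ≤ _ := by linarith
  have hfb : ∀ j x, |x j * (s x)⁻¹| ≤ 1 := fun j x => by
    have hi0 : 0 < (s x)⁻¹ := inv_pos.mpr (hs0 x)
    rw [abs_mul, abs_of_pos hi0]
    exact (mul_le_mul_of_nonneg_right (mg_coord_le _ _) hi0.le).trans (hxs x)
  have hfb2 : ∀ j x, |x j * (s x)⁻¹ * (x j - m j)| ≤ 1 + ‖x - m‖ ^ 2 := fun j x => by
    rw [abs_mul]
    have h1 : |x j - m j| ≤ ‖x - m‖ := mg_coord_le (x - m) j
    have h2 := hfb j x
    have h3 : |x j * (s x)⁻¹| * |x j - m j| ≤ 1 * ‖x - m‖ :=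
      mul_le_mul h2 h1 (abs_nonneg _) zero_le_one
    nlinarith [sq_nonneg (‖x - m‖ - 1)]
  have hst : ∀ j, ∫ x, x j * (s x)⁻¹ * (x j - m j) ∂(multiGaussian d m S)
      = ∫ x, g j x ∂(multiGaussian d m S) := by
    intro j
    have hC : 0 ≤ 2 * ‖v j‖ * (√ε)⁻¹ := by positivity
    have := mg_stein m hS j (C := 1 + 2 * ‖v j‖ * (√ε)⁻¹) (fun x => mg_deriv hε j x) (by positivity)
      (fun x => by
        have := hfb j x
        nlinarith [sq_nonneg ‖x - m‖])
      (fun x => by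
        have := hfb2 j x
        nlinarith [sq_nonneg ‖x - m‖])
      (hgc j)
      (fun x => by
        have h : |g j x| ≤ (1 + 2 * ‖v j‖ * (√ε)⁻¹) * (1 + ‖x - m‖ ^ 2) := by
          have := hgb j x
          nlinarith [sq_nonneg ‖x - m‖]
        exact h)
    exact this
  have hgi : ∀ j, Integrable (g j) (multiGaussian d m S) := fun j =>
    mg_integrable' m hS (hgc j) (C := 2 * ‖v j‖ * (√ε)⁻¹) (by positivity) fun x => by
      have := hgb j x
      have hC : 0 ≤ 2 * ‖v j‖ * (√ε)⁻¹ := by positivity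
      nlinarith [sq_nonneg ‖x - m‖]
  have hL : ∫ x, inner ℝ x (x - m) * (√(‖x‖ ^ 2 + ε))⁻¹ ∂(multiGaussian d m S)
      = ∫ x, ∑ j, g j x ∂(multiGaussian d m S) := by
    rw [integral_finsetSum _ (fun j _ => hgi j), ← Finset.sum_congr rfl (fun j _ => hst j),
      ← integral_finsetSum]
    · refine integral_congr_ae (Filter.Eventually.of_forall fun x => ?_)
      simp only [mg_inner, Finset.sum_mul]
      refine Finset.sum_congr rfl fun j _ => ?_
      simp only [s, PiLp.sub_apply]
      ring
    · intro j _
      exact mg_integrable' m hS (by fun_prop) zero_le_one fun x => by simpa using hfb2 j x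
  have hsum : ∀ x, (S.trace - lam) * (s x)⁻¹ ≤ ∑ j, g j x := by
    intro x
    have hi0 : 0 < (s x)⁻¹ := inv_pos.mpr (hs0 x)
    have e1 : ∑ j, g j x = S.trace * (s x)⁻¹ - (s x)⁻¹ ^ 3 * (x.ofLp ⬝ᵥ (S.mulVec x.ofLp)) := by
      simp only [g, Finset.sum_sub_distrib]
      congr 1
      · simp only [hvk, Matrix.trace, Matrix.diag, Finset.sum_mul]
        exact Finset.sum_congr rfl fun j _ => mul_comm _ _
      · simp only [mg_inner, hvk, dotProduct, Matrix.mulVec, Finset.mul_sum]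
        rw [Finset.sum_comm]
        refine Finset.sum_congr rfl fun j _ => Finset.sum_congr rfl fun k _ => ?_
        ring
    have h1 := mg_rayleigh hS.1 x
    have hl0 : 0 ≤ lam := Real.iSup_nonneg fun i => (hS.eigenvalues_pos i).le
    have h2 : x.ofLp ⬝ᵥ (S.mulVec x.ofLp) ≤ lam * s x ^ 2 := by
      refine h1.trans (mul_le_mul_of_nonneg_left ?_ hl0)
      rw [hs2]; linarith
    have h3 := mul_le_mul_of_nonneg_left h2 (pow_pos hi0 3).le
    have h4 : (s x)⁻¹ ^ 3 * (lam * s x ^ 2) = lam * (s x)⁻¹ := by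
      have := (hs0 x).ne'
      field_simp
    rw [e1]
    linarith
  have hpt : ∀ x, (S.trace - lam) * (2 / a - (‖m‖ + √ε + (‖x - m‖ ^ 2 / T + T) / 2) / a ^ 2)
      ≤ ∑ j, g j x := by
    intro x
    refine le_trans (mul_le_mul_of_nonneg_left ?_ hkc) (hsum x)
    have h1 : s x ≤ ‖m‖ + √ε + (‖x - m‖ ^ 2 / T + T) / 2 := by
      have h2 : ‖x‖ ≤ ‖m‖ + ‖x - m‖ := by
        have := norm_add_le m (x - m)
        simpa using this
      have h3 : ‖x - m‖ ≤ (‖x - m‖ ^ 2 / T + T) / 2 := by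
        have : (‖x - m‖ ^ 2 / T + T) / 2 - ‖x - m‖ = (‖x - m‖ - T) ^ 2 / (2 * T) := by
          field_simp
          ring
        have h5 : 0 ≤ (‖x - m‖ - T) ^ 2 / (2 * T) := by positivity
        linarith
      linarith [hsle x]
    have h4 : 2 / a - s x / a ^ 2 ≤ (s x)⁻¹ := by
      have hp := hs0 x
      have : (s x)⁻¹ - (2 / a - s x / a ^ 2) = (s x - a) ^ 2 / (s x * a ^ 2) := by
        field_simp
        ring
      have h5 : 0 ≤ (s x - a) ^ 2 / (s x * a ^ 2) := by positivity
      linarith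
    have h6 : s x / a ^ 2 ≤ (‖m‖ + √ε + (‖x - m‖ ^ 2 / T + T) / 2) / a ^ 2 := by gcongr
    linarith
  have hi2 : Integrable (fun x => ‖x - m‖ ^ 2) (multiGaussian d m S) :=
    mg_integrable' m hS (by fun_prop) zero_le_one fun x => by
      rw [abs_of_nonneg (by positivity)]; linarith
  rw [hL]
  have hmono := integral_mono (μ := multiGaussian d m S)
    (f := fun x => (S.trace - lam) * (2 / a - (‖m‖ + √ε + (‖x - m‖ ^ 2 / T + T) / 2) / a ^ 2))
    (by fun_prop) (integrable_finsetSum _ fun j _ => hgi j) hpt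
  refine le_trans ?_ hmono
  have hcalc : ∫ x, (S.trace - lam) * (2 / a - (‖m‖ + √ε + (‖x - m‖ ^ 2 / T + T) / 2) / a ^ 2)
      ∂(multiGaussian d m S) = (S.trace - lam) * (2 / a - (‖m‖ + √ε + T) / a ^ 2) := by
    rw [integral_const_mul, integral_sub (by fun_prop) (by fun_prop), integral_div, integral_div,
      integral_add (by fun_prop) (by fun_prop), integral_div,
      integral_add (by fun_prop) (by fun_prop), integral_add (by fun_prop) (by fun_prop),
      integral_div, mg_second m hS, ← hT2]
    simp
    left
    field_simp
    ring
  rw [hcalc, div_eq_mul_inv]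
  refine mul_le_mul_of_nonneg_left ?_ hkc
  have h7 : (‖m‖ + √ε + T) / a ^ 2 ≤ a / a ^ 2 := by
    gcongr
    linarith
  have h8 : a / a ^ 2 = a⁻¹ := by field_simp
  have h9 : 2 / a = 2 * a⁻¹ := by ring
  linarith

lemma mg_lim {d : ℕ} (hd : 2 ≤ d) (m : EuclideanSpace ℝ (Fin d)) {S : Matrix (Fin d) (Fin d) ℝ}
    (hS : S.PosDef) {r : ℝ} (hr : ‖m‖ ≤ r) :
    Integrable (fun x => inner ℝ x (x - m) * ‖x‖⁻¹) (multiGaussian d m S) ∧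
    (S.trace - ⨆ i, hS.1.eigenvalues i) / (r + √S.trace) ≤
      ∫ x, inner ℝ x (x - m) * ‖x‖⁻¹ ∂(multiGaussian d m S) := by
  have := mg_prob m hS
  have hdom : Integrable (fun x => ‖x - m‖) (multiGaussian d m S) :=
    mg_integrable' m hS (by fun_prop) zero_le_one fun x => by
      rw [abs_of_nonneg (by positivity)]
      nlinarith [sq_nonneg (‖x - m‖ - 1)]
  have hb0 : ∀ x : EuclideanSpace ℝ (Fin d), ∀ t : ℝ, ‖x‖ ≤ t → ‖inner ℝ x (x - m) * t⁻¹‖ ≤ ‖x - m‖ := by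
    intro x t ht
    have ht0 : 0 ≤ t := (norm_nonneg _).trans ht
    rw [norm_mul, Real.norm_eq_abs, Real.norm_eq_abs, abs_of_nonneg (inv_nonneg.mpr ht0)]
    calc |inner ℝ x (x - m)| * t⁻¹ ≤ (t * ‖x - m‖) * t⁻¹ := by
          gcongr
          exact (abs_real_inner_le_norm _ _).trans (by gcongr)
      _ = ‖x - m‖ * (t * t⁻¹) := by ring
      _ ≤ ‖x - m‖ * 1 := by gcongr; exact mul_inv_le_one
      _ = _ := mul_one _
  have hmeas : Measurable fun x : EuclideanSpace ℝ (Fin d) => inner ℝ x (x - m) * ‖x‖⁻¹ := by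
    fun_prop
  refine ⟨hdom.mono' hmeas.aestronglyMeasurable
    (Filter.Eventually.of_forall fun x => hb0 x _ le_rfl), ?_⟩
  let e : ℕ → ℝ := fun n => 1 / ((n : ℝ) + 1)
  have he0 : ∀ n, 0 < e n := fun n => by positivity
  have het : Filter.Tendsto e Filter.atTop (nhds 0) := tendsto_one_div_add_atTop_nhds_zero_nat
  have hT0 : 0 < √S.trace := Real.sqrt_pos.mpr (mg_trace hd hS).1
  have hr0 : 0 ≤ r := (norm_nonneg m).trans hr
  have h1 : Filter.Tendsto
      (fun n => (S.trace - ⨆ i, hS.1.eigenvalues i) / (r + √S.trace + √(e n)))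
      Filter.atTop (nhds ((S.trace - ⨆ i, hS.1.eigenvalues i) / (r + √S.trace))) := by
    have h2 : Filter.Tendsto (fun n => r + √S.trace + √(e n)) Filter.atTop
        (nhds (r + √S.trace)) := by
      have := ((Real.continuous_sqrt.tendsto 0).comp het).const_add (r + √S.trace)
      simpa using this
    exact tendsto_const_nhds.div h2 (by positivity)
  have h2 : Filter.Tendsto
      (fun n => ∫ x, inner ℝ x (x - m) * (√(‖x‖ ^ 2 + e n))⁻¹ ∂(multiGaussian d m S))
      Filter.atTop (nhds (∫ x, inner ℝ x (x - m) * ‖x‖⁻¹ ∂(multiGaussian d m S))) := by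
    refine tendsto_integral_of_dominated_convergence (fun x => ‖x - m‖) ?_ hdom ?_ ?_
    · intro n
      have : Measurable fun x : EuclideanSpace ℝ (Fin d) =>
        inner ℝ x (x - m) * (√(‖x‖ ^ 2 + e n))⁻¹ := by fun_prop
      exact this.aestronglyMeasurable
    · intro n
      refine Filter.Eventually.of_forall fun x => hb0 x _ (Real.le_sqrt_of_sq_le ?_)
      linarith [he0 n]
    · refine Filter.Eventually.of_forall fun x => ?_
      by_cases hx : x = 0
      · simp [hx]
      · have hx' : ‖x‖ ≠ 0 := norm_ne_zero_iff.mpr hx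
        have h3 : Filter.Tendsto (fun n => √(‖x‖ ^ 2 + e n)) Filter.atTop (nhds ‖x‖) := by
          have := (Real.continuous_sqrt.tendsto (‖x‖ ^ 2 + 0)).comp (het.const_add (‖x‖ ^ 2))
          rw [add_zero, Real.sqrt_sq (norm_nonneg _)] at this
          exact this
        exact (h3.inv₀ hx').const_mul _
  exact le_of_tendsto_of_tendsto' h1 h2 fun n => mg_eps hd m hS hr (he0 n)

/-- Strict non-asymptotic improvement of the shrinkage estimator `(1 - c/|X|) X` over `X`
for a nondegenerate Gaussian vector `X` in `ℝ^d` (`d ≥ 2`), with shrinkage constant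
`c = (tr Σ - λ_max(Σ))/(r + (tr Σ)^{1/2})` and `r ≥ |m|`:
`E|(1 - c/|X|)X - m|² ≤ E|X - m|² - c²`. -/
theorem shrinkage_strict_improvement (d : ℕ) (hd : 2 ≤ d)
    (m : EuclideanSpace ℝ (Fin d)) (S : Matrix (Fin d) (Fin d) ℝ)
    (hS : S.PosDef) (r : ℝ) (hr : ‖m‖ ≤ r) :
    let c := (S.trace - ⨆ i, hS.1.eigenvalues i) / (r + Real.sqrt S.trace)
    ∫ x, ‖(1 - c / ‖x‖) • x - m‖ ^ 2 ∂(multiGaussian d m S)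
      ≤ (∫ x, ‖x - m‖ ^ 2 ∂(multiGaussian d m S)) - c ^ 2 := by
  intro c
  have := mg_prob m hS
  obtain ⟨hint, hle⟩ := mg_lim hd m hS hr
  obtain ⟨htr, hkc⟩ := mg_trace hd hS
  have hr0 : 0 ≤ r := (norm_nonneg m).trans hr
  have hc0 : 0 ≤ c := div_nonneg hkc (by positivity)
  have hi2 : Integrable (fun x => ‖x - m‖ ^ 2) (multiGaussian d m S) :=
    mg_integrable' m hS (by fun_prop) zero_le_one fun x => by
      rw [abs_of_nonneg (by positivity)]; linarith
  have hne : ∀ᵐ x ∂(multiGaussian d m S), x ≠ 0 := by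
    have : Nonempty (Fin d) := ⟨⟨0, by omega⟩⟩
    have hv : ∀ᵐ x ∂(volume : Measure (EuclideanSpace ℝ (Fin d))), x ≠ 0 := by
      simp [ae_iff]
    exact (withDensity_absolutelyContinuous _ _).ae_le hv
  have heq : ∫ x, ‖(1 - c / ‖x‖) • x - m‖ ^ 2 ∂(multiGaussian d m S)
      = ∫ x, (‖x - m‖ ^ 2 - 2 * c * (inner ℝ x (x - m) * ‖x‖⁻¹) + c ^ 2)
        ∂(multiGaussian d m S) := by
    refine integral_congr_ae ?_
    filter_upwards [hne] with x hx
    have hx' : ‖x‖ ≠ 0 := norm_ne_zero_iff.mpr hx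
    have e1 : (1 - c / ‖x‖) • x - m = (x - m) - (c / ‖x‖) • x := by
      rw [sub_smul, one_smul]; abel
    rw [e1, norm_sub_sq_real, inner_smul_right, norm_smul, real_inner_comm, mul_pow,
      Real.norm_eq_abs, sq_abs]
    field_simp
  rw [heq, integral_add (by fun_prop) (by fun_prop), integral_sub hi2 (by fun_prop),
    integral_const_mul]
  have h3 : c * c ≤ c * ∫ x, inner ℝ x (x - m) * ‖x‖⁻¹ ∂(multiGaussian d m S) :=
    mul_le_mul_of_nonneg_left hle hc0
  simp
  linarith
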